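/- Let M be a loopless matroid of rank r ≥ 1 on a finite ground set E, and let P be a polymatroid on E whose base polytope B(P) ⊆ ℝ^E is full dimensional, i.e., the affine hull of B(P) has dimension |E|−1. Then, in the Chow ring A(M)_ℚ, the divisor class D = Σ_{F nonempty flat of M} (rk_P(E∖F) − rk_P(E))·z_F satisfies D^{r−1} ≠ 0. -/

import Mathlib

open Finset

attribute [local instance] Classical.propDecidable

/-- The rank-function axioms of a polymatroid on a finite ground set. -/
def IsPolymatroid {α : Type*} [Fintype α] [DecidableEq α] (rk : Finset α → ℕ) : Prop :=
  rk ∅ = 0 ∧ (∀ I J : Finset α, I ⊆ J → rk I ≤ rk J) ∧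
    ∀ I J : Finset α, rk (I ∩ J) + rk (I ∪ J) ≤ rk I + rk J

/-- The base polytope `B(P)` of a polymatroid. -/
def basePolytope {α : Type*} [Fintype α] (rk : Finset α → ℕ) : Set (α → ℝ) :=
  {x | (∀ i, 0 ≤ x i) ∧ (∑ i, x i) = (rk Finset.univ : ℝ) ∧
      ∀ I : Finset α, (∑ i ∈ I, x i) ≤ (rk I : ℝ)}

/-- The rank-function axioms of a matroid on a finite ground set: a matroid is a polymatroid
with cage `(1, …, 1)`. -/
def IsMatroidRank {α : Type*} [Fintype α] [DecidableEq α] (rk : Finset α → ℕ) : Prop :=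
  rk ∅ = 0 ∧ (∀ I J : Finset α, I ⊆ J → rk I ≤ rk J) ∧
    (∀ I J : Finset α, rk (I ∩ J) + rk (I ∪ J) ≤ rk I + rk J) ∧
    ∀ e : α, rk {e} ≤ 1

/-- A flat of a matroid: a subset closed under the closure operator. -/
def IsFlat {α : Type*} [Fintype α] [DecidableEq α] (rk : Finset α → ℕ) (F : Finset α) : Prop :=
  ∀ e : α, rk (insert e F) = rk F → e ∈ F

/-- The nonempty flats of a matroid, indexing the Chow ring generators `z_F`. -/
def NonemptyFlat {α : Type*} [Fintype α] [DecidableEq α] (rk : Finset α → ℕ) : Type _ :=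
  {F : Finset α // F.Nonempty ∧ IsFlat rk F}

noncomputable instance {α : Type*} [Fintype α] [DecidableEq α] (rk : Finset α → ℕ) :
    Fintype (NonemptyFlat rk) :=
  Fintype.ofFinite {F : Finset α // F.Nonempty ∧ IsFlat rk F}

/-- The defining ideal of the Chow ring of a matroid (with rational coefficients): generated
by the products `z_F z_{F'}` over incomparable pairs of nonempty flats, and the linear forms
`Σ_{F ∋ i} z_F` for ground set elements `i`. -/
noncomputable def chowIdealQ {α : Type*} [Fintype α] [DecidableEq α] (rk : Finset α → ℕ) :
    Ideal (MvPolynomial (NonemptyFlat rk) ℚ) :=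
  Ideal.span
    ({p | ∃ F F' : NonemptyFlat rk, ¬F.1 ⊆ F'.1 ∧ ¬F'.1 ⊆ F.1 ∧
        p = MvPolynomial.X F * MvPolynomial.X F'} ∪
      {p | ∃ i : α,
        p = ∑ F : NonemptyFlat rk, if i ∈ F.1 then MvPolynomial.X F else 0})

/-!
In the simplicial generators `h_F = -∑_{G ⊇ F} z_G`, the dragon Hall–Rado rule defines a linear
functional on polynomials that vanishes on the relations of the Chow ring; it takes the value one
on `α ^ (r - 1)`, where `α = h_E` is the hyperplane class, so some linear form `deg` on the Chow
ring satisfies `deg (α ^ (r - 1)) = 1`. The products of the `z_F` along all complete flags of proper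
flats are equal to `α ^ (r - 1)`.

For a chain of flats, a point of the base polytope that is tight on all complements of the chain,
produced by the greedy algorithm, gives an effective representative of `D` that avoids the chain.
Hence `D` is nef, and so is `α`. Expanding one factor at a time, a product of nef classes with the
generators of a chain of proper flats, `r - 1` factors in all, has nonnegative degree. Full
dimensionality of the base polytope provides a relative interior point, which writes a positive
multiple of `D` as `α` plus an effective class; so `deg (D ^ b * α ^ (r - 1 - b))` is positive by
induction on `b`.
-/

/-! ### Finite partial orders -/

section PartialOrder

variable {β : Type*} [PartialOrder β] [Fintype β]

theorem exists_sum_ge_eq {M : Type*} [AddCommGroup M] (g : β → M) :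
    ∃ w : β → M, ∀ a, ∑ b with a ≤ b, w b = g a := by
  let w : β → M := WellFoundedGT.fix fun a w => g a - ∑ b : {b // a < b}, w b b.2
  have w_eq (a : β) : w a = g a - ∑ b with a < b, w b := by
    rw [sum_subtype (p := (a < ·)) _ (by simp)]
    exact WellFoundedGT.fix_eq _ a
  refine ⟨w, fun a => ?_⟩
  have hfilter : univ.filter (a ≤ ·) = insert a (univ.filter (a < ·)) := by
    ext b
    simp [le_iff_eq_or_lt, eq_comm]
  rw [hfilter, sum_insert (by simp), w_eq a, sub_add_cancel]

theorem sum_ge_sub_sum_ge {M : Type*} [AddCommGroup M] (w : β → M) {a c : β} (hac : a ≤ c) :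
    ∑ x with a ≤ x, w x - ∑ x with c ≤ x, w x = ∑ x with a ≤ x ∧ ¬ c ≤ x, w x := by
  rw [← sum_filter_add_sum_filter_not (univ.filter (a ≤ ·)) (c ≤ ·) w, filter_filter, filter_filter,
    filter_congr fun x _ => and_iff_right_of_imp hac.trans, add_sub_cancel_left]

theorem mul_mem_of_isLUB {R : Type*} [CommRing R] {I : Ideal R} {w : β → R}
    (hI : ∀ a b, ¬ a ≤ b → ¬ b ≤ a → ∃ c, IsLUB {a, b} c ∧
      (∑ x with a ≤ x, w x - ∑ x with c ≤ x, w x) *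
        (∑ x with b ≤ x, w x - ∑ x with c ≤ x, w x) ∈ I)
    (p : β × β) : ¬ p.1 ≤ p.2 → ¬ p.2 ≤ p.1 → w p.1 * w p.2 ∈ I := by
  induction p using WellFoundedGT.induction with
  | _ p ih =>
    obtain ⟨a, b⟩ := p
    intro hab hba
    obtain ⟨c, hc, hmem⟩ := hI a b hab hba
    have hac : a ≤ c := hc.1 (by simp)
    have hbc : b ≤ c := hc.1 (by simp)
    have le_of_ge {x : β} (hax : a ≤ x) (hbx : b ≤ x) : c ≤ x := hc.2 (by simp [hax, hbx])
    rw [sum_ge_sub_sum_ge w hac, sum_ge_sub_sum_ge w hbc, sum_mul_sum, ← sum_product',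
      ← add_sum_erase _ _ (a := (a, b)) (by
        simpa using ⟨fun h => hba (hbc.trans h), fun h => hab (hac.trans h)⟩)] at hmem
    refine (Ideal.add_mem_iff_left _ (Ideal.sum_mem _ fun q hq => ?_)).1 hmem
    simp only [mem_erase, mem_product, mem_filter, mem_univ, true_and] at hq
    obtain ⟨hne, ⟨hax, hcx⟩, hby, hcy⟩ := hq
    exact ih q (lt_of_le_of_ne ⟨hax, hby⟩ hne.symm)
      (fun hxy => hcy (le_of_ge (hax.trans hxy) hby))
      (fun hyx => hcx (le_of_ge hax (hby.trans hyx)))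

end PartialOrder

theorem exists_mem_forall_notMem_of_isChain {α ι : Type*} {f : ι → Finset α} {C : Finset ι}
    {X : Finset α} (hC : IsChain (fun i j => f i ⊆ f j) (C : Set ι)) (hX : X.Nonempty)
    (hCX : ∀ i ∈ C, ¬ X ⊆ f i) : ∃ e ∈ X, ∀ i ∈ C, e ∉ f i := by
  by_contra! hcover
  obtain ⟨e, he⟩ := hX
  obtain ⟨i, hi, -⟩ := hcover e he
  have : Std.Refl fun i j => f i ⊆ f j := ⟨fun i => Subset.refl (f i)⟩
  obtain ⟨j, hj, hXj⟩ := DirectedOn.exists_mem_subset_of_finset_subset_biUnion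
    (f := fun i => (f i : Set α)) ⟨i, hi⟩ (by simpa using hC.directedOn)
    (s := X) fun e he => by simpa using hcover e he
  exact hCX j hj (by simpa using hXj)

/-! ### Polymatroids and flats -/

namespace IsPolymatroid

variable {α : Type*} [Fintype α] [DecidableEq α] {rk : Finset α → ℕ}

theorem rk_union_le (h : IsPolymatroid rk) {X Y Z : Finset α} (hXY : X ⊆ Y) (hXZ : X ⊆ Z)
    (hrk : rk Y ≤ rk X) : rk (Y ∪ Z) ≤ rk Z := by
  have hsubmod := h.2.2 Y Z
  have hmono := h.2.1 X (Y ∩ Z) (subset_inter hXY hXZ)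
  omega

theorem subset_of_isFlat (h : IsPolymatroid rk) {X Y F : Finset α} (hF : IsFlat rk F)
    (hXY : X ⊆ Y) (hXF : X ⊆ F) (hrk : rk Y ≤ rk X) : Y ⊆ F := fun e he =>
  hF e <| le_antisymm
    ((h.2.1 _ _ (insert_subset (mem_union_left F he) subset_union_right)).trans
      (h.rk_union_le hXY hXF hrk))
    (h.2.1 _ _ (subset_insert e F))

theorem rk_lt_of_ssubset (h : IsPolymatroid rk) {F X : Finset α} (hF : IsFlat rk F)
    (hFX : F ⊂ X) : rk F < rk X :=
  not_le.1 fun hrk => hFX.2 (h.subset_of_isFlat hF hFX.1 Subset.rfl hrk)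

theorem exists_isLeast_isFlat (h : IsPolymatroid rk) (X : Finset α) :
    ∃ K, IsLeast {F | IsFlat rk F ∧ X ⊆ F} K ∧ rk K = rk X := by
  obtain ⟨K, hXK, hK⟩ := (Set.toFinite {Y : Finset α | X ⊆ Y ∧ rk Y = rk X}).exists_le_maximal
    ⟨Subset.rfl, rfl⟩
  have hrk : rk K = rk X := hK.1.2
  refine ⟨K, ⟨⟨fun e he => ?_, hXK⟩, fun F hF => ?_⟩, hrk⟩
  · exact hK.2 ⟨hXK.trans (subset_insert e K), he.trans hrk⟩ (subset_insert e K)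
      (mem_insert_self e K)
  · exact h.subset_of_isFlat hF.1 hXK hF.2 hrk.le

/-! ### Integer points of base polytopes -/

theorem exists_extend_greedy (h : IsPolymatroid rk) {V : Finset α} {e : α} (he : e ∉ V)
    {x : α → ℤ} (hx : ∀ I ⊆ V, ∑ i ∈ I, x i ≤ rk I) (hV : ∑ i ∈ V, x i = rk V) :
    ∃ y : α → ℤ, (∀ I : Finset α, e ∉ I → ∑ i ∈ I, y i = ∑ i ∈ I, x i) ∧
      (∀ I ⊆ insert e V, ∑ i ∈ I, y i ≤ rk I) ∧ ∑ i ∈ insert e V, y i = rk (insert e V) := by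
  let y := Function.update x e (rk (insert e V) - rk V : ℤ)
  have hy (I : Finset α) (hI : e ∉ I) : ∑ i ∈ I, y i = ∑ i ∈ I, x i := sum_update_of_notMem hI ..
  have hye : y e = rk (insert e V) - rk V := Function.update_self ..
  refine ⟨y, hy, fun I hI => ?_, ?_⟩
  · by_cases heI : e ∈ I
    · have hIV : I.erase e ⊆ V := by simpa [subset_insert_iff] using hI
      have hinter : I ∩ V = I.erase e := by
        rw [← insert_erase heI, insert_inter_of_notMem he, erase_insert (notMem_erase e I),
          inter_eq_left.2 hIV]
      have hunion : I ∪ V = insert e V := by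
        rw [← insert_erase heI, insert_union, union_eq_right.2 hIV]
      have hsubmod := h.2.2 I V
      have hfeasible := hx _ hIV
      rw [hinter, hunion] at hsubmod
      rw [← add_sum_erase _ _ heI, hy _ (notMem_erase e I), hye]
      omega
    · rw [hy I heI]
      exact hx I ((subset_insert_iff_of_notMem heI).1 hI)
  · rw [sum_insert he, hy V he, hye, hV, sub_add_cancel]

theorem exists_tight_of_isChain (h : IsPolymatroid rk) (U : Finset α) :
    ∀ C : Finset (Finset α), IsChain (· ⊆ ·) (C : Set (Finset α)) → (∀ S ∈ C, S ⊆ U) →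
      ∃ x : α → ℤ, (∀ I ⊆ U, ∑ i ∈ I, x i ≤ rk I) ∧ ∑ i ∈ U, x i = rk U ∧
        ∀ S ∈ C, ∑ i ∈ S, x i = rk S := by
  induction U using Finset.strongInduction with
  | _ U ih =>
    intro C hC hCU
    rcases U.eq_empty_or_nonempty with rfl | hU
    · refine ⟨0, fun I _ => by simp, by simp [h.1], fun S hS => ?_⟩
      simp [subset_empty.1 (hCU S hS), h.1]
    have hC' : IsChain (· ⊆ ·) (C.erase U : Set (Finset α)) := hC.mono (by simp)
    have hCU' (S : Finset α) (hS : S ∈ C.erase U) : ¬ U ⊆ S := fun hUS =>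
      ne_of_mem_erase hS ((hCU S (mem_of_mem_erase hS)).antisymm hUS)
    obtain ⟨e, heU, he⟩ :=
      exists_mem_forall_notMem_of_isChain (f := id) (C := C.erase U) hC' hU hCU'
    obtain ⟨x, hx, hxU, hxC⟩ := ih (U.erase e) (erase_ssubset heU) (C.erase U) hC' fun S hS =>
      subset_erase.2 ⟨hCU S (mem_of_mem_erase hS), he S hS⟩
    obtain ⟨y, hyx, hy, hyU⟩ := h.exists_extend_greedy (notMem_erase e U) hx hxU
    rw [insert_erase heU] at hy hyU
    refine ⟨y, hy, hyU, fun S hS => ?_⟩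
    by_cases hSU : S = U
    · rw [hSU, hyU]
    · have hS' : S ∈ C.erase U := mem_erase.2 ⟨hSU, hS⟩
      rw [hyx S (he S hS'), hxC S hS']

theorem exists_interior_point (h : IsPolymatroid rk)
    (hstrict : ∀ S : Finset α, S.Nonempty → S ≠ univ → rk univ < rk S + rk Sᶜ) :
    ∃ N : ℕ, 0 < N ∧ ∃ x : α → ℤ, ∑ i, x i = N * rk univ ∧
      ∀ S : Finset α, S.Nonempty → S ≠ univ → ∑ i ∈ S, x i < N * rk S := by
  have hvertex (S : Finset α) := h.exists_tight_of_isChain univ {Sᶜ}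
    (by simp) fun S _ => subset_univ S
  choose v hv hvuniv hvtight using hvertex
  refine ⟨Fintype.card (Finset α), Fintype.card_pos, fun i => ∑ S, v S i, ?_, fun S hS hS' => ?_⟩
  · rw [sum_comm, sum_congr rfl fun S _ => hvuniv S]
    simp
  · have hlt : ∑ i ∈ S, v S i < rk S := by
      have htight := hvtight S Sᶜ (mem_singleton_self _)
      have hsplit := sum_add_sum_compl S (v S)
      rw [hvuniv S, htight] at hsplit
      have := hstrict S hS hS'
      omega
    calc ∑ i ∈ S, ∑ T, v T i = ∑ T, ∑ i ∈ S, v T i := sum_comm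
      _ < ∑ _T : Finset α, (rk S : ℤ) :=
        sum_lt_sum (fun T _ => hv T S (subset_univ S)) ⟨S, mem_univ S, hlt⟩
      _ = Fintype.card (Finset α) * rk S := by simp

end IsPolymatroid

/-! ### Dimension of the base polytope -/

section Dimension

theorem map_eq_zero_of_mem_vectorSpan {k V W : Type*} [Ring k] [AddCommGroup V] [Module k V]
    [AddCommGroup W] [Module k W] (f : V →ₗ[k] W) {s : Set V} {c : W} (hf : ∀ x ∈ s, f x = c)
    {v : V} (hv : v ∈ vectorSpan k s) : f v = 0 := by
  rw [vectorSpan_def] at hv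
  refine (Submodule.span_le (p := LinearMap.ker f)).2 ?_ hv
  rintro _ ⟨x, hx, y, hy, rfl⟩
  simp [hf x hx, hf y hy]

variable {α : Type*} [Fintype α]

theorem sum_eq_rk_of_mem_basePolytope [DecidableEq α] {rk : Finset α → ℕ} {S : Finset α}
    (hS : rk S + rk Sᶜ ≤ rk univ) {x : α → ℝ} (hx : x ∈ basePolytope rk) :
    ∑ i ∈ S, x i = rk S := by
  obtain ⟨-, huniv, hle⟩ := hx
  have hsplit := sum_add_sum_compl S x
  have hS' : (rk S + rk Sᶜ : ℝ) ≤ rk univ := by exact_mod_cast hS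
  linarith [hle S, hle Sᶜ]

theorem finrank_add_two_le_card {S : Finset α} (hS : S.Nonempty)
    (hS' : S ≠ univ) {V : Submodule ℝ (α → ℝ)} (hV : ∀ v ∈ V, ∑ i ∈ S, v i = 0)
    (hV' : ∀ v ∈ V, ∑ i, v i = 0) : Module.finrank ℝ V + 2 ≤ Fintype.card α := by
  obtain ⟨a, ha⟩ := hS
  obtain ⟨b, hb⟩ : ∃ b, b ∉ S := by simpa [eq_univ_iff_forall] using hS'
  let f : (α → ℝ) →ₗ[ℝ] ℝ × ℝ :=
    (∑ i ∈ S, LinearMap.proj i).prod (∑ i ∈ Sᶜ, LinearMap.proj i)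
  have hf (v : α → ℝ) : f v = (∑ i ∈ S, v i, ∑ i ∈ Sᶜ, v i) := by simp [f]
  have hsurj : Function.Surjective f := fun p =>
    ⟨Pi.single a p.1 + Pi.single b p.2, by
      simp [hf, sum_add_distrib, ha, hb]⟩
  have hker : V ≤ LinearMap.ker f := fun v hv => by
    have hsplit := sum_add_sum_compl S v
    rw [hV v hv, hV' v hv, zero_add] at hsplit
    rw [LinearMap.mem_ker, hf, hV v hv, hsplit, Prod.mk_zero_zero]
  have hmono := Submodule.finrank_mono hker
  have hrank := LinearMap.finrank_range_add_finrank_ker f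
  rw [LinearMap.range_eq_top.2 hsurj, finrank_top, Module.finrank_prod, Module.finrank_self,
    Module.finrank_fintype_fun_eq_card] at hrank
  omega

theorem rk_univ_lt_add_compl [DecidableEq α] {rk : Finset α → ℕ}
    (hfull : Module.finrank ℝ (affineSpan ℝ (basePolytope rk)).direction = Fintype.card α - 1)
    {S : Finset α} (hS : S.Nonempty) (hS' : S ≠ univ) : rk univ < rk S + rk Sᶜ := by
  by_contra! hle
  rw [direction_affineSpan] at hfull
  have hsum (v : α → ℝ) (hv : v ∈ vectorSpan ℝ (basePolytope rk)) : ∑ i ∈ S, v i = 0 := by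
    simpa using map_eq_zero_of_mem_vectorSpan (∑ i ∈ S, LinearMap.proj i) (c := (rk S : ℝ))
      (fun x hx => by simpa using sum_eq_rk_of_mem_basePolytope hle hx) hv
  have hsum' (v : α → ℝ) (hv : v ∈ vectorSpan ℝ (basePolytope rk)) : ∑ i, v i = 0 := by
    simpa using map_eq_zero_of_mem_vectorSpan (∑ i, LinearMap.proj i) (c := (rk univ : ℝ))
      (fun x hx => by simpa using hx.2.1) hv
  have hdim := finrank_add_two_le_card hS hS' hsum hsum'
  omega

end Dimension

/-! ### The dragon Hall–Rado functional -/

section DragonHallRado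

variable {α : Type*} [DecidableEq α] {rk : Finset α → ℕ}

/-- The dragon Hall–Rado condition on a multiset `m` of subsets of the ground set: for a loopless
matroid of rank `r`, a monomial of degree `r - 1` in the simplicial generators of the Chow ring
has degree one if its exponent `m` satisfies it, and degree zero otherwise. The truncated
subtraction makes the condition at rank zero say that `m` vanishes there. -/
def DragonHallRado (rk : Finset α → ℕ) (m : Finset α →₀ ℕ) : Prop :=
  ∀ A : Finset (Finset α), ∑ S ∈ A, m S ≤ rk (A.sup id) - 1

theorem sum_add_single_one {ι : Type*} [DecidableEq ι] (A : Finset ι) (m : ι →₀ ℕ) (i : ι) :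
    ∑ j ∈ A, (m + Finsupp.single i 1 : ι →₀ ℕ) j = ∑ j ∈ A, m j + if i ∈ A then 1 else 0 := by
  simp [sum_add_distrib, Finsupp.single_apply]

namespace DragonHallRado

theorem mono {m : Finset α →₀ ℕ} {X Y : Finset α} (hXY : X ⊆ Y)
    (h : DragonHallRado rk (m + .single X 1)) : DragonHallRado rk (m + .single Y 1) := by
  intro A
  by_cases hY : Y ∈ A
  · have hX := h (insert X A)
    have hsup : (insert X A).sup id = A.sup id := by
      rw [sup_insert]
      exact sup_eq_right.2 (hXY.trans (le_sup (f := id) hY))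
    have hsum : ∑ S ∈ A, m S ≤ ∑ S ∈ insert X A, m S := sum_le_sum_of_subset (subset_insert X A)
    rw [sum_add_single_one, if_pos (mem_insert_self X A), hsup] at hX
    rw [sum_add_single_one, if_pos hY]
    omega
  · have hX := h A
    rw [sum_add_single_one] at hX ⊢
    rw [if_neg hY]
    omega

variable {m : Finset α →₀ ℕ} {F G K : Finset α}

theorem exists_rk_sup_le_of_not (h : DragonHallRado rk (m + .single K 1 + .single K 1))
    (hF : ¬ DragonHallRado rk (m + .single F 1 + .single K 1)) :
    ∃ A : Finset (Finset α), F ∈ A ∧ rk (A.sup id) ≤ ∑ S ∈ A, m S + 1 := by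
  obtain ⟨A, hA⟩ := not_forall.1 hF
  have hKA := h A
  simp only [sum_add_single_one] at hA hKA
  exact ⟨A, by split_ifs at hA hKA <;> first | assumption | omega,
    by split_ifs at hA hKA <;> omega⟩

variable [Fintype α]

theorem add_three_le (hrk : IsPolymatroid rk) (hFK : F ⊆ K) (hGK : G ⊆ K)
    (hK : rk K = rk (F ∪ G)) (h : DragonHallRado rk (m + .single K 1 + .single K 1))
    {A : Finset (Finset α)} (hF : F ∈ A) (hG : G ∈ A) : ∑ S ∈ A, m S + 3 ≤ rk (A.sup id) := by
  have hA := h (insert K A)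
  have hsup : rk (K ∪ A.sup id) ≤ rk (A.sup id) := hrk.rk_union_le (union_subset hFK hGK)
    (union_subset (le_sup (f := id) hF) (le_sup (f := id) hG)) hK.le
  have hsum : ∑ S ∈ A, m S ≤ ∑ S ∈ insert K A, m S := sum_le_sum_of_subset (subset_insert K A)
  simp only [sum_add_single_one, mem_insert_self, if_true, sup_insert, id, sup_eq_union] at hA
  omega

theorem of_add_join (hrk : IsPolymatroid rk) (hFK : F ⊆ K) (hGK : G ⊆ K)
    (hK : rk K = rk (F ∪ G)) (hF : DragonHallRado rk (m + .single F 1 + .single K 1))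
    (hG : DragonHallRado rk (m + .single G 1 + .single K 1)) :
    DragonHallRado rk (m + .single F 1 + .single G 1) := by
  intro A
  have hKK : DragonHallRado rk (m + .single K 1 + .single K 1) :=
    mono hFK (by rwa [add_right_comm])
  have hFA := hF A
  have hGA := hG A
  simp only [sum_add_single_one] at hFA hGA ⊢
  by_cases hFmem : F ∈ A
  · by_cases hGmem : G ∈ A
    · have hjoin := hKK.add_three_le hrk hFK hGK hK hFmem hGmem
      simp only [if_pos hFmem, if_pos hGmem]
      omega
    · rw [if_neg hGmem]
      omega
  · rw [if_neg hFmem]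
    omega

/- Sets `A ∋ F` and `B ∋ G` violating the two conditions have a union violating
`add_three_le`, by submodularity. -/
theorem add_join_or (hrk : IsPolymatroid rk) (hFK : F ⊆ K) (hGK : G ⊆ K)
    (hK : rk K = rk (F ∪ G)) (h : DragonHallRado rk (m + .single K 1 + .single K 1)) :
    DragonHallRado rk (m + .single F 1 + .single K 1) ∨
      DragonHallRado rk (m + .single G 1 + .single K 1) := by
  by_contra! hnot
  obtain ⟨A, hFA, hA⟩ := h.exists_rk_sup_le_of_not hnot.1
  obtain ⟨B, hGB, hB⟩ := h.exists_rk_sup_le_of_not hnot.2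
  have hunion := h.add_three_le hrk hFK hGK hK (mem_union_left B hFA) (mem_union_right A hGB)
  have hinter : ∑ S ∈ A ∩ B, m S ≤ rk ((A ∩ B).sup id) := by
    have := h (A ∩ B)
    simp only [sum_add_single_one] at this
    omega
  have hmono : rk ((A ∩ B).sup id) ≤ rk (A.sup id ∩ B.sup id) :=
    hrk.2.1 _ _ (le_inf (sup_mono inter_subset_left) (sup_mono inter_subset_right))
  have hsubmod := hrk.2.2 (A.sup id) (B.sup id)
  have hsum : ∑ S ∈ A ∪ B, m S + ∑ S ∈ A ∩ B, m S = ∑ S ∈ A, m S + ∑ S ∈ B, m S :=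
    sum_union_inter
  rw [sup_union, sup_eq_union] at hunion
  omega

end DragonHallRado

theorem dragonHallRado_single_univ [Fintype α] (rk : Finset α → ℕ) :
    DragonHallRado rk (.single univ (rk univ - 1)) := by
  intro A
  simp only [Finsupp.single_apply, sum_ite_eq]
  split_ifs with huniv
  · rw [show A.sup id = univ from top_unique (le_sup (f := id) huniv)]
  · exact Nat.zero_le _

theorem not_dragonHallRado_add_single (m : Finset α →₀ ℕ) {S : Finset α} (hS : rk S ≤ 1) :
    ¬ DragonHallRado rk (m + .single S 1) := fun h => by
  have := h {S}
  rw [sum_add_single_one, if_pos (mem_singleton_self S), sup_singleton] at this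
  simp only [id] at this
  omega

/-- The linear functional on polynomials in simplicial generators `h_S` that is the indicator
function of the dragon Hall–Rado condition on monomials. -/
noncomputable def dragonFunctional (rk : Finset α → ℕ) : MvPolynomial (Finset α) ℚ →ₗ[ℚ] ℚ :=
  (MvPolynomial.basisMonomials (Finset α) ℚ).constr ℚ fun m => if DragonHallRado rk m then 1 else 0

theorem dragonFunctional_monomial (rk : Finset α → ℕ) (m : Finset α →₀ ℕ) :
    dragonFunctional rk (.monomial m 1) = if DragonHallRado rk m then 1 else 0 :=
  (MvPolynomial.basisMonomials (Finset α) ℚ).constr_basis ℚ _ m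

/-- The largest ideal on which a linear functional vanishes. -/
def largestIdealInKer {R A : Type*} [CommSemiring R] [CommSemiring A] [Module R A]
    (φ : A →ₗ[R] R) : Ideal A where
  carrier := {a | ∀ b, φ (b * a) = 0}
  add_mem' ha hb c := by rw [mul_add, map_add, ha c, hb c, add_zero]
  zero_mem' c := by rw [mul_zero, map_zero]
  smul_mem' c a ha b := by rw [smul_eq_mul, ← mul_assoc, ha]

theorem mem_largestIdealInKer_of_monomial {R σ : Type*} [CommSemiring R]
    {φ : MvPolynomial σ R →ₗ[R] R} {p : MvPolynomial σ R}
    (h : ∀ m, φ (.monomial m 1 * p) = 0) : p ∈ largestIdealInKer φ := fun q =>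
  LinearMap.congr_fun (f := φ ∘ₗ LinearMap.mulRight R p) (g := 0)
    ((MvPolynomial.basisMonomials σ R).ext fun m => by simpa using h m) q

theorem X_mem_largestIdealInKer {S : Finset α} (hS : rk S ≤ 1) :
    MvPolynomial.X S ∈ largestIdealInKer (dragonFunctional rk) :=
  mem_largestIdealInKer_of_monomial fun m => by
    rw [MvPolynomial.X, MvPolynomial.monomial_mul, mul_one, dragonFunctional_monomial,
      if_neg (not_dragonHallRado_add_single m hS)]

theorem X_sub_mul_X_sub_mem_largestIdealInKer [Fintype α] (hrk : IsPolymatroid rk)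
    {F G K : Finset α} (hFK : F ⊆ K) (hGK : G ⊆ K) (hK : rk K = rk (F ∪ G)) :
    (MvPolynomial.X F - MvPolynomial.X K) * (MvPolynomial.X G - MvPolynomial.X K) ∈
      largestIdealInKer (dragonFunctional rk) := by
  refine mem_largestIdealInKer_of_monomial fun m => ?_
  have hX (S T : Finset α) : dragonFunctional rk (.monomial m 1 * .X S * .X T) =
      if DragonHallRado rk (m + .single S 1 + .single T 1) then 1 else 0 := by
    rw [MvPolynomial.X, MvPolynomial.X, MvPolynomial.monomial_mul, MvPolynomial.monomial_mul,
      mul_one, mul_one, dragonFunctional_monomial]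
  have hswap (S T : Finset α) : m + .single S 1 + .single T 1 = m + .single T 1 + .single S 1 :=
    add_right_comm ..
  let D (S T : Finset α) := DragonHallRado rk (m + .single S 1 + .single T 1)
  have hFG_FK : D F G → D F K := .mono hGK
  have hFG_GK : D F G → D G K := fun h => .mono hFK (by rwa [hswap])
  have hFK_KK : D F K → D K K := fun h => .mono hFK (by rwa [hswap])
  have hGK_KK : D G K → D K K := fun h => .mono hGK (by rwa [hswap])
  have hFK_GK : D F K → D G K → D F G := .of_add_join hrk hFK hGK hK
  have hKK : D K K → D F K ∨ D G K := DragonHallRado.add_join_or hrk hFK hGK hK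
  rw [show (.monomial m 1 * ((.X F - .X K) * (.X G - .X K)) : MvPolynomial (Finset α) ℚ) =
      .monomial m 1 * .X F * .X G - .monomial m 1 * .X F * .X K - .monomial m 1 * .X G * .X K +
        .monomial m 1 * .X K * .X K by ring, map_add, map_sub, map_sub, hX, hX, hX, hX]
  grind

end DragonHallRado

/-! ### The Chow ring -/

section ChowRing

variable {α : Type*} [Fintype α] [DecidableEq α] {rk : Finset α → ℕ}

theorem IsMatroidRank.isPolymatroid (hM : IsMatroidRank rk) : IsPolymatroid rk :=
  ⟨hM.1, hM.2.1, hM.2.2.1⟩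

namespace NonemptyFlat

instance : PartialOrder (NonemptyFlat rk) := Subtype.partialOrder _

instance [Nonempty α] : OrderTop (NonemptyFlat rk) where
  top := ⟨univ, univ_nonempty, fun e _ => mem_univ e⟩
  le_top F := subset_univ F.1

theorem exists_isLUB (hrk : IsPolymatroid rk) (F G : NonemptyFlat rk) :
    ∃ K, IsLUB {F, G} K ∧ rk K.1 = rk (F.1 ∪ G.1) := by
  obtain ⟨K, ⟨⟨hK, hFGK⟩, hleast⟩, hrkK⟩ := hrk.exists_isLeast_isFlat (F.1 ∪ G.1)
  obtain ⟨hFK, hGK⟩ := union_subset_iff.1 hFGK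
  refine ⟨⟨K, F.2.1.mono hFK, hK⟩, ⟨?_, fun H hH => ?_⟩, hrkK⟩
  · rintro _ (rfl | rfl)
    exacts [hFK, hGK]
  · exact hleast ⟨H.2.2, union_subset (hH (.inl rfl)) (hH (.inr rfl))⟩

theorem exists_le_iff_mem (hrk : IsPolymatroid rk) (i : α) :
    ∃ K : NonemptyFlat rk, rk K.1 = rk {i} ∧ ∀ F : NonemptyFlat rk, K ≤ F ↔ i ∈ F.1 := by
  obtain ⟨K, ⟨⟨hK, hiK⟩, hleast⟩, hrkK⟩ := hrk.exists_isLeast_isFlat {i}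
  rw [singleton_subset_iff] at hiK
  exact ⟨⟨K, ⟨i, hiK⟩, hK⟩, hrkK, fun F =>
    ⟨fun hKF => hKF hiK, fun hiF => hleast ⟨F.2.2, singleton_subset_iff.2 hiF⟩⟩⟩

theorem strictMono_rk (hrk : IsPolymatroid rk) : StrictMono fun F : NonemptyFlat rk => rk F.1 :=
  fun F _ hFG => hrk.rk_lt_of_ssubset F.2.2 hFG

theorem card_lt_rk_of_isChain (hrk : IsPolymatroid rk) (hpos : ∀ e, 0 < rk {e})
    {C : Finset (NonemptyFlat rk)} (hC : IsChain (· ≤ ·) (C : Set (NonemptyFlat rk)))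
    {X : Finset α} (hX : X.Nonempty) (hCX : ∀ F ∈ C, F.1 ⊂ X) : #C < rk X := by
  have rk_pos {Y : Finset α} : Y.Nonempty → 0 < rk Y := fun ⟨e, he⟩ =>
    (hpos e).trans_le (hrk.2.1 _ _ (singleton_subset_iff.2 he))
  have hmaps : ∀ F ∈ C, rk F.1 ∈ Ioo 0 (rk X) := fun F hF =>
    mem_Ioo.2 ⟨rk_pos F.2.1, hrk.rk_lt_of_ssubset F.2.2 (hCX F hF)⟩
  have hinj : Set.InjOn (fun F : NonemptyFlat rk => rk F.1) C := fun F hF G hG hFG => by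
    by_contra hne
    rcases hC hF hG hne with hle | hle
    · exact (strictMono_rk hrk (hle.lt_of_ne hne)).ne hFG
    · exact (strictMono_rk hrk (hle.lt_of_ne' hne)).ne' hFG
  have hcard := card_le_card_of_injOn _ hmaps hinj
  rw [Nat.card_Ioo] at hcard
  have := rk_pos hX
  omega

theorem eq_of_isChain (hrk : IsPolymatroid rk) (hpos : ∀ e, 0 < rk {e})
    {C : Finset (NonemptyFlat rk)} (hC : IsChain (· ≤ ·) (C : Set (NonemptyFlat rk)))
    {F G : NonemptyFlat rk} (hCF : ∀ H ∈ C, H ≤ F) (hCG : ∀ H ∈ C, H ≤ G) {i : α}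
    (hiF : i ∈ F.1) (hiG : i ∈ G.1) (hiC : ∀ H ∈ C, i ∉ H.1) (hF : rk F.1 ≤ #C + 1)
    (hG : rk G.1 ≤ #C + 1) : F = G := by
  have hi : i ∈ F.1 ∩ G.1 := mem_inter.2 ⟨hiF, hiG⟩
  have hcard : #C < rk (F.1 ∩ G.1) := card_lt_rk_of_isChain hrk hpos hC ⟨i, hi⟩ fun H hH =>
    ⟨subset_inter (hCF H hH) (hCG H hH), fun h => hiC H hH (h hi)⟩
  exact Subtype.ext <| Subset.antisymm
    (hrk.subset_of_isFlat G.2.2 inter_subset_left inter_subset_right (by omega))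
    (hrk.subset_of_isFlat F.2.2 inter_subset_right inter_subset_left (by omega))

end NonemptyFlat

theorem chowIdealQ_le_comap (hM : IsMatroidRank rk)
    {w : NonemptyFlat rk → MvPolynomial (Finset α) ℚ}
    (hw : ∀ F : NonemptyFlat rk, ∑ G with F ≤ G, w G = -MvPolynomial.X F.1) :
    chowIdealQ rk ≤ (largestIdealInKer (dragonFunctional rk)).comap (MvPolynomial.aeval w) := by
  have hrk := hM.isPolymatroid
  rw [chowIdealQ, Ideal.span_le]
  rintro _ (⟨F, G, hFG, hGF, rfl⟩ | ⟨i, rfl⟩)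
  · simp only [SetLike.mem_coe, Ideal.mem_comap, map_mul, MvPolynomial.aeval_X]
    refine mul_mem_of_isLUB (fun A B _ _ => ?_) (F, G) hFG hGF
    obtain ⟨K, hK, hrkK⟩ := NonemptyFlat.exists_isLUB hrk A B
    refine ⟨K, hK, ?_⟩
    rw [hw, hw, hw, neg_sub_neg, neg_sub_neg, ← neg_mul_neg, neg_sub, neg_sub]
    exact X_sub_mul_X_sub_mem_largestIdealInKer hrk (hK.1 (.inl rfl)) (hK.1 (.inr rfl)) hrkK
  · obtain ⟨K, hrkK, hK⟩ := NonemptyFlat.exists_le_iff_mem hrk i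
    have hsum : MvPolynomial.aeval w
        (∑ F : NonemptyFlat rk, if i ∈ F.1 then (MvPolynomial.X F : MvPolynomial _ ℚ) else 0) =
          -MvPolynomial.X K.1 := by
      simp only [← hw K, ← sum_filter, hK, map_sum, MvPolynomial.aeval_X]
    rw [SetLike.mem_coe, Ideal.mem_comap, hsum, neg_mem_iff]
    exact X_mem_largestIdealInKer (hrkK.trans_le (hM.2.2.2 i))

/-- The rational Chow ring of the matroid with rank function `rk`. -/
abbrev ChowRing (rk : Finset α → ℕ) : Type _ := MvPolynomial (NonemptyFlat rk) ℚ ⧸ chowIdealQ rk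

namespace ChowRing

/-- The Chow ring generator `z_F` of a nonempty flat `F`. -/
noncomputable def z (F : NonemptyFlat rk) : ChowRing rk :=
  Ideal.Quotient.mk (chowIdealQ rk) (MvPolynomial.X F)

theorem z_mul_z_eq_zero {F G : NonemptyFlat rk} (hFG : ¬ F ≤ G) (hGF : ¬ G ≤ F) :
    z F * z G = 0 := by
  rw [z, z, ← map_mul]
  exact Ideal.Quotient.eq_zero_iff_mem.2 (Ideal.subset_span (.inl ⟨F, G, hFG, hGF, rfl⟩))

theorem sum_z_eq_zero (i : α) : ∑ F : NonemptyFlat rk with i ∈ F.1, z F = 0 := by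
  have hmem : ∑ F : NonemptyFlat rk, (if i ∈ F.1 then MvPolynomial.X F else 0) ∈ chowIdealQ rk :=
    Ideal.subset_span (.inr ⟨i, rfl⟩)
  rwa [← sum_filter, ← Ideal.Quotient.eq_zero_iff_mem, map_sum] at hmem

theorem prod_z_mul_z_eq_zero {C : Finset (NonemptyFlat rk)} {F G : NonemptyFlat rk} (hF : F ∈ C)
    (hFG : ¬ F ≤ G) (hGF : ¬ G ≤ F) : (∏ H ∈ C, z H) * z G = 0 := by
  rw [← prod_erase_mul _ _ hF, mul_assoc, z_mul_z_eq_zero hFG hGF, mul_zero]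

/-! ### Nef divisors -/

/-- Combinatorial nefness of a divisor class: for every chain of flats the class has an effective
representative in which no flat of the chain occurs. -/
def IsNef (D : ChowRing rk) : Prop :=
  ∀ C : Finset (NonemptyFlat rk), IsChain (· ≤ ·) (C : Set (NonemptyFlat rk)) →
    ∃ c : NonemptyFlat rk → ℚ, (∀ F, 0 ≤ c F) ∧ (∀ F ∈ C, c F = 0) ∧ D = ∑ F, c F • z F

/-- The divisor class on the matroid `rk` of the base polytope of the polymatroid `rkP`. -/
noncomputable def divisor (rk rkP : Finset α → ℕ) : ChowRing rk :=
  ∑ F : NonemptyFlat rk, ((rkP (univ \ F.1) : ℚ) - rkP univ) • z F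

theorem sum_smul_z_eq_zero (x : α → ℚ) : ∑ F : NonemptyFlat rk, (∑ i ∈ F.1, x i) • z F = 0 := by
  calc ∑ F : NonemptyFlat rk, (∑ i ∈ F.1, x i) • z F
    _ = ∑ F : NonemptyFlat rk, ∑ i, (if i ∈ F.1 then x i • z F else 0) := by
        simp only [sum_smul, sum_ite_mem, univ_inter]
    _ = ∑ i, x i • ∑ F : NonemptyFlat rk with i ∈ F.1, z F := by
        rw [sum_comm]
        simp only [smul_sum, sum_filter, smul_ite, smul_zero]
    _ = 0 := by simp only [sum_z_eq_zero, smul_zero, sum_const_zero]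

theorem smul_divisor_eq_sum {rkP : Finset α → ℕ} {N : ℕ} {x : α → ℤ}
    (hx : ∑ i, x i = N * rkP univ) :
    (N : ℚ) • divisor rk rkP =
      ∑ F : NonemptyFlat rk, ((N * rkP F.1ᶜ - ∑ i ∈ F.1ᶜ, x i : ℤ) : ℚ) • z F := by
  have hcoeff (F : NonemptyFlat rk) :
      (N : ℚ) * (rkP (univ \ F.1) - rkP univ) + ∑ i ∈ F.1, (x i : ℚ) =
        ((N * rkP F.1ᶜ - ∑ i ∈ F.1ᶜ, x i : ℤ) : ℚ) := by
    rw [← sum_add_sum_compl F.1, ← eq_sub_iff_add_eq] at hx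
    rw [← compl_eq_univ_sdiff, ← Int.cast_sum, hx]
    push_cast
    ring
  rw [← add_zero ((N : ℚ) • divisor rk rkP), ← sum_smul_z_eq_zero fun i => (x i : ℚ), divisor,
    smul_sum, ← sum_add_distrib]
  simp only [smul_smul, ← add_smul, hcoeff]

theorem isNef_divisor {rkP : Finset α → ℕ} (hP : IsPolymatroid rkP) : IsNef (divisor rk rkP) := by
  intro C hC
  obtain ⟨x, hx, hxuniv, hxC⟩ := hP.exists_tight_of_isChain univ (C.image fun F => F.1ᶜ)
    (by
      rw [coe_image]
      exact hC.symm.image_of_map_rel _ _ _ fun F G hFG => compl_subset_compl.2 hFG)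
    fun S _ => subset_univ S
  refine ⟨fun F => ((rkP F.1ᶜ - ∑ i ∈ F.1ᶜ, x i : ℤ) : ℚ), fun F => ?_, fun F hF => ?_, ?_⟩
  · exact Int.cast_nonneg (sub_nonneg.2 (hx _ (subset_univ _)))
  · exact Int.cast_eq_zero.2 (sub_eq_zero.2 (hxC _ (mem_image_of_mem _ hF)).symm)
  · simpa using smul_divisor_eq_sum (rk := rk) (N := 1) (x := x) (by simpa using hxuniv)

variable [Nonempty α]

/-! ### The degree map -/

/-- The class `α = -z_E`, which for a realizable matroid is the pullback of the hyperplane class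
along the wonderful compactification. -/
noncomputable def hyperplaneClass (rk : Finset α → ℕ) : ChowRing rk := -z ⊤

theorem hyperplaneClass_pow_ne_zero (hM : IsMatroidRank rk) :
    hyperplaneClass rk ^ (rk univ - 1) ≠ 0 := by
  obtain ⟨w, hw⟩ := exists_sum_ge_eq
    fun F : NonemptyFlat rk => -(MvPolynomial.X F.1 : MvPolynomial (Finset α) ℚ)
  have hsum : ∑ F with ⊤ ≤ F, w F = w ⊤ := by
    simp only [top_le_iff, sum_filter, sum_ite_eq', mem_univ, if_true]
  have hwtop : w ⊤ = -MvPolynomial.X univ := hsum.symm.trans (hw ⊤)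
  intro hzero
  rw [hyperplaneClass, z, ← map_neg, ← map_pow, Ideal.Quotient.eq_zero_iff_mem] at hzero
  have hmem := chowIdealQ_le_comap hM hw hzero 1
  rw [one_mul, map_pow, map_neg, MvPolynomial.aeval_X, hwtop, neg_neg,
    MvPolynomial.X_pow_eq_monomial, dragonFunctional_monomial,
    if_pos (dragonHallRado_single_univ rk)] at hmem
  exact one_ne_zero hmem

theorem exists_degree (hM : IsMatroidRank rk) :
    ∃ deg : ChowRing rk →ₗ[ℚ] ℚ, deg (hyperplaneClass rk ^ (rk univ - 1)) = 1 :=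
  Module.Projective.exists_dual_eq_one ℚ (hyperplaneClass_pow_ne_zero hM)

/-! ### Flags of flats -/

theorem hyperplaneClass_eq_sum (i : α) :
    hyperplaneClass rk = ∑ F : NonemptyFlat rk with i ∈ F.1 ∧ F ≠ ⊤, z F := by
  have hfilter : univ.filter (fun F : NonemptyFlat rk => i ∈ F.1 ∧ F ≠ ⊤) =
      (univ.filter fun F : NonemptyFlat rk => i ∈ F.1).erase ⊤ := by
    ext F
    simp [and_comm]
  have htop : ⊤ ∈ univ.filter fun F : NonemptyFlat rk => i ∈ F.1 :=
    mem_filter.2 ⟨mem_univ _, mem_univ i⟩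
  rw [hyperplaneClass, neg_eq_iff_add_eq_zero, hfilter, add_sum_erase _ _ htop, sum_z_eq_zero]

theorem z_mul_hyperplaneClass_pow_eq_zero (hrk : IsPolymatroid rk) {m : ℕ} {F : NonemptyFlat rk}
    (hF : F ≠ ⊤) (hm : rk univ ≤ m + rk F.1) : z F * hyperplaneClass rk ^ m = 0 := by
  induction m generalizing F with
  | zero =>
    have hlt : rk F.1 < rk univ := NonemptyFlat.strictMono_rk hrk hF.lt_top
    omega
  | succ m ih =>
    obtain ⟨i, -, hi⟩ := exists_of_ssubset (show F.1 ⊂ univ from hF.lt_top)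
    rw [pow_succ', ← mul_assoc, hyperplaneClass_eq_sum i, mul_sum, sum_mul,
      ← hyperplaneClass_eq_sum i]
    refine sum_eq_zero fun G hG => ?_
    obtain ⟨hiG, hG⟩ := (mem_filter.1 hG).2
    by_cases hFG : F ≤ G
    · have hlt : rk F.1 < rk G.1 :=
        NonemptyFlat.strictMono_rk hrk (hFG.lt_of_ne (by rintro rfl; exact hi hiG))
      rw [mul_assoc, ih hG (by omega), mul_zero]
    · rw [z_mul_z_eq_zero hFG fun hGF => hi (hGF hiG), zero_mul]

theorem prod_z_mul_hyperplaneClass_pow_succ (hrk : IsPolymatroid rk) (hpos : ∀ e, 0 < rk {e})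
    {C : Finset (NonemptyFlat rk)} (hC : IsChain (· ≤ ·) (C : Set (NonemptyFlat rk)))
    {F : NonemptyFlat rk} (hCF : ∀ H ∈ C, H < F) (hF : F ≠ ⊤) (hrkF : rk F.1 ≤ #C + 1) {n : ℕ}
    (hn : rk univ ≤ n + #C + 2) :
    (∏ H ∈ C, z H) * hyperplaneClass rk ^ (n + 1) =
      (∏ H ∈ C, z H) * z F * hyperplaneClass rk ^ n := by
  obtain ⟨i, hiF, hiC⟩ := exists_mem_forall_notMem_of_isChain
    (f := fun H : NonemptyFlat rk => H.1) hC F.2.1 fun H hH => (hCF H hH).not_ge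
  rw [pow_succ', ← mul_assoc, hyperplaneClass_eq_sum i, mul_sum, sum_mul,
    ← hyperplaneClass_eq_sum i]
  refine sum_eq_single_of_mem F (mem_filter.2 ⟨mem_univ F, hiF, hF⟩) fun G hG hGF => ?_
  obtain ⟨hiG, hG⟩ := (mem_filter.1 hG).2
  by_cases hCG : ∀ H ∈ C, H ≤ G
  · have hrkG : ¬ rk G.1 ≤ #C + 1 := fun hrkG => hGF <|
      (NonemptyFlat.eq_of_isChain hrk hpos hC (fun H hH => (hCF H hH).le) hCG hiF hiG hiC hrkF
        hrkG).symm
    rw [mul_assoc, z_mul_hyperplaneClass_pow_eq_zero hrk hG (by omega), mul_zero]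
  · push Not at hCG
    obtain ⟨H, hH, hHG⟩ := hCG
    rw [prod_z_mul_z_eq_zero hH hHG fun hGH => hiC H hH (hGH hiG), zero_mul]

theorem prod_z_mul_hyperplaneClass_pow (hrk : IsPolymatroid rk) (hpos : ∀ e, 0 < rk {e})
    {C : Finset (NonemptyFlat rk)} (hC : IsChain (· ≤ ·) (C : Set (NonemptyFlat rk)))
    (htop : ⊤ ∉ C) (hrkC : ∀ F ∈ C, rk F.1 ≤ #C) {n : ℕ} (hn : n + #C = rk univ - 1) :
    (∏ F ∈ C, z F) * hyperplaneClass rk ^ n = hyperplaneClass rk ^ (rk univ - 1) := by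
  induction C using induction_on_max_value (fun F : NonemptyFlat rk => rk F.1) generalizing n with
  | empty => rw [prod_empty, one_mul, ← hn, card_empty, add_zero]
  | insert F s hFs hmax ih =>
    rw [card_insert_of_notMem hFs] at hrkC hn
    have hs : IsChain (· ≤ ·) (s : Set (NonemptyFlat rk)) := hC.mono (by simp)
    have hlt : ∀ H ∈ s, H < F := fun H hH => by
      have hne : H ≠ F := by rintro rfl; exact hFs hH
      refine ((hC (by simp [hH]) (by simp) hne).resolve_right fun hFH => ?_).lt_of_ne hne
      exact (hmax H hH).not_gt (NonemptyFlat.strictMono_rk hrk (hFH.lt_of_ne' hne))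
    have hrkF : rk F.1 ≤ #s + 1 := hrkC F (mem_insert_self F s)
    have hrks : ∀ H ∈ s, rk H.1 ≤ #s := fun H hH =>
      Nat.le_of_lt_succ ((NonemptyFlat.strictMono_rk hrk (hlt H hH)).trans_le hrkF)
    have hF : F ≠ ⊤ := by rintro rfl; exact htop (mem_insert_self _ s)
    rw [prod_insert hFs, mul_comm (z F),
      ← prod_z_mul_hyperplaneClass_pow_succ hrk hpos hs hlt hF hrkF (by omega)]
    exact ih hs (fun h => htop (mem_insert_of_mem h)) hrks (by omega)

/-! ### Positivity -/

theorem isNef_hyperplaneClass : IsNef (hyperplaneClass rk) := by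
  intro C hC
  obtain ⟨i, -, hi⟩ := exists_mem_forall_notMem_of_isChain
    (f := fun F : NonemptyFlat rk => F.1) (C := C.erase ⊤) (hC.mono (by simp)) univ_nonempty
    fun F hF h => ne_of_mem_erase hF (top_unique (show ⊤ ≤ F from h))
  refine ⟨fun F => if i ∈ F.1 ∧ F ≠ ⊤ then 1 else 0, fun F => by positivity, fun F hF => ?_, ?_⟩
  · exact if_neg fun ⟨hiF, htop⟩ => hi F (mem_erase.2 ⟨htop, hF⟩) hiF
  · simp only [hyperplaneClass_eq_sum i, sum_filter, ite_smul, one_smul, zero_smul]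

theorem degree_prod_nonneg (hrk : IsPolymatroid rk) (hpos : ∀ e, 0 < rk {e})
    {deg : ChowRing rk →ₗ[ℚ] ℚ} (hdeg : 0 ≤ deg (hyperplaneClass rk ^ (rk univ - 1)))
    {s : Multiset (ChowRing rk)} (hs : ∀ D ∈ s, IsNef D) {C : Finset (NonemptyFlat rk)}
    (hC : IsChain (· ≤ ·) (C : Set (NonemptyFlat rk))) (htop : ⊤ ∉ C)
    (hcard : s.card + #C = rk univ - 1) : 0 ≤ deg ((∏ F ∈ C, z F) * s.prod) := by
  induction s using Multiset.induction_on generalizing C with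
  | empty =>
    rw [Multiset.card_zero, zero_add] at hcard
    have hrkC : ∀ F ∈ C, rk F.1 ≤ #C := fun F hF => by
      have hlt : rk F.1 < rk univ :=
        NonemptyFlat.strictMono_rk hrk (lt_top_iff_ne_top.2 (by rintro rfl; exact htop hF))
      omega
    have hflag := prod_z_mul_hyperplaneClass_pow hrk hpos hC htop hrkC (n := 0) (by omega)
    rwa [Multiset.prod_zero, ← pow_zero, hflag]
  | cons D s ih =>
    obtain ⟨c, hc, hcC, hD⟩ := hs D (Multiset.mem_cons_self D s) (insert ⊤ C) (by
      rw [coe_insert]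
      exact hC.insert fun F _ _ => .inr le_top)
    rw [Multiset.prod_cons, hD, ← mul_assoc, mul_sum, sum_mul, map_sum]
    refine sum_nonneg fun F _ => ?_
    rw [mul_smul_comm, smul_mul_assoc, map_smul, smul_eq_mul]
    by_cases hF : F ∈ insert ⊤ C
    · rw [hcC F hF, zero_mul]
    obtain ⟨hFtop, hFC⟩ := not_or.1 (mem_insert.not.1 hF)
    refine mul_nonneg (hc F) ?_
    by_cases hcomp : ∀ G ∈ C, F ≤ G ∨ G ≤ F
    · rw [mul_comm _ (z F), ← prod_insert hFC]
      refine ih (fun D hD => hs D (Multiset.mem_cons_of_mem hD)) ?_ ?_ ?_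
      · rw [coe_insert]
        exact hC.insert fun G hG _ => hcomp G hG
      · exact mem_insert.not.2 (not_or.2 ⟨Ne.symm hFtop, htop⟩)
      · rw [card_insert_of_notMem hFC, ← hcard, Multiset.card_cons]
        omega
    · push Not at hcomp
      obtain ⟨G, hG, hFG, hGF⟩ := hcomp
      rw [prod_z_mul_z_eq_zero hG hGF hFG, zero_mul, map_zero]

/- Induction on `b`: replacing one factor `D` by the right-hand side of `hD`, the term `α` is
covered by the induction hypothesis, and the others are nonnegative by nefness. -/
theorem degree_pow_mul_pow_pos (hrk : IsPolymatroid rk) (hpos : ∀ e, 0 < rk {e})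
    {deg : ChowRing rk →ₗ[ℚ] ℚ} (hdeg : 0 < deg (hyperplaneClass rk ^ (rk univ - 1)))
    {D : ChowRing rk} (hnef : IsNef D) {N : ℚ} (hN : 0 < N) {d : NonemptyFlat rk → ℚ}
    (hd : ∀ F, 0 ≤ d F) (hdtop : d ⊤ = 0) (hD : N • D = hyperplaneClass rk + ∑ F, d F • z F)
    {a b : ℕ} (hab : b + a = rk univ - 1) : 0 < deg (D ^ b * hyperplaneClass rk ^ a) := by
  induction b generalizing a with
  | zero => rwa [pow_zero, one_mul, ← zero_add a, hab]
  | succ b ih =>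
    have hexpand : N • (D ^ (b + 1) * hyperplaneClass rk ^ a) =
        D ^ b * hyperplaneClass rk ^ (a + 1) +
          ∑ F, d F • (z F * (D ^ b * hyperplaneClass rk ^ a)) :=
      calc N • (D ^ (b + 1) * hyperplaneClass rk ^ a)
          = N • D * (D ^ b * hyperplaneClass rk ^ a) := by rw [smul_mul_assoc, pow_succ', mul_assoc]
        _ = _ := by simp only [hD, add_mul, sum_mul, smul_mul_assoc]; ring
    have hsum : 0 ≤ deg (∑ F, d F • (z F * (D ^ b * hyperplaneClass rk ^ a))) := by
      rw [map_sum]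
      refine sum_nonneg fun F _ => ?_
      rw [map_smul, smul_eq_mul]
      rcases eq_or_ne F ⊤ with rfl | hF
      · rw [hdtop, zero_mul]
      have hnonneg := degree_prod_nonneg hrk hpos hdeg.le (C := {F}) (s :=
        .replicate b D + .replicate a (hyperplaneClass rk)) (fun E hE => ?_) (by simp)
        (by simpa using hF.symm) (by simp; omega)
      · rw [prod_singleton, Multiset.prod_add, Multiset.prod_replicate,
          Multiset.prod_replicate] at hnonneg
        exact mul_nonneg (hd F) hnonneg
      · rcases Multiset.mem_add.1 hE with hE | hE <;> rw [Multiset.eq_of_mem_replicate hE]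
        exacts [hnef, isNef_hyperplaneClass]
    refine (mul_pos_iff_of_pos_left hN).1 ?_
    rw [← smul_eq_mul, ← map_smul, hexpand, map_add]
    exact add_pos_of_pos_of_nonneg (ih (by omega)) hsum

theorem exists_smul_divisor_eq_add {rkP : Finset α → ℕ} (hP : IsPolymatroid rkP)
    (hstrict : ∀ S : Finset α, S.Nonempty → S ≠ univ → rkP univ < rkP S + rkP Sᶜ) :
    ∃ N : ℚ, 0 < N ∧ ∃ d : NonemptyFlat rk → ℚ, (∀ F, 0 ≤ d F) ∧ d ⊤ = 0 ∧
      N • divisor rk rkP = hyperplaneClass rk + ∑ F, d F • z F := by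
  obtain ⟨N, hN, x, hx, hlt⟩ := hP.exists_interior_point hstrict
  obtain ⟨i⟩ := ‹Nonempty α›
  let c (F : NonemptyFlat rk) : ℤ := N * rkP F.1ᶜ - ∑ j ∈ F.1ᶜ, x j
  have hctop : c ⊤ = 0 := by
    simp [c, show (⊤ : NonemptyFlat rk).1ᶜ = ∅ from compl_univ, hP.1]
  have hc (F : NonemptyFlat rk) (hF : F ≠ ⊤) : 0 < c F := by
    have hne : F.1ᶜ.Nonempty :=
      nonempty_iff_ne_empty.2 fun h => hF (Subtype.ext ((compl_eq_empty_iff _).1 h))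
    exact sub_pos.2 (hlt _ hne ((compl_ne_univ_iff_nonempty _).2 F.2.1))
  refine ⟨N, Nat.cast_pos.2 hN, fun F => c F - if i ∈ F.1 ∧ F ≠ ⊤ then 1 else 0,
    fun F => ?_, ?_, ?_⟩
  · rcases eq_or_ne F ⊤ with rfl | hF
    · simp [hctop]
    · have : (1 : ℚ) ≤ c F := by exact_mod_cast hc F hF
      dsimp only
      split_ifs <;> linarith
  · simp [hctop]
  · rw [smul_divisor_eq_sum hx, hyperplaneClass_eq_sum i, sum_filter, ← sum_add_distrib]
    refine sum_congr rfl fun F _ => ?_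
    rw [sub_smul, ite_smul, one_smul, zero_smul, add_sub_cancel]

theorem divisor_pow_ne_zero (hM : IsMatroidRank rk) (hpos : ∀ e, 0 < rk {e})
    {rkP : Finset α → ℕ} (hP : IsPolymatroid rkP)
    (hstrict : ∀ S : Finset α, S.Nonempty → S ≠ univ → rkP univ < rkP S + rkP Sᶜ) :
    divisor rk rkP ^ (rk univ - 1) ≠ 0 := by
  obtain ⟨deg, hdeg⟩ := exists_degree hM
  obtain ⟨N, hN, d, hd, hdtop, hD⟩ := exists_smul_divisor_eq_add (rk := rk) hP hstrict
  have hdegree : 0 < deg (divisor rk rkP ^ (rk univ - 1) * hyperplaneClass rk ^ 0) :=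
    degree_pow_mul_pow_pos hM.isPolymatroid hpos (hdeg ▸ one_pos) (isNef_divisor hP) hN hd hdtop hD
      (add_zero _)
  intro hzero
  rw [hzero, zero_mul, map_zero] at hdegree
  exact hdegree.false

end ChowRing

end ChowRing

/-- For a loopless matroid `M` of rank `r ≥ 1` on `E` and a polymatroid `P` on `E` whose base
polytope is full dimensional (its affine hull has dimension `|E| - 1`), the divisor class
`D = Σ_F (rk_P(E∖F) - rk_P(E)) z_F` satisfies `D^{r-1} ≠ 0` in the Chow ring `A(M)_ℚ`. -/
theorem numerical_dimension_of_full_dimensional_polymatroid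
    {α : Type} [Fintype α] [DecidableEq α] {r : ℕ}
    (rk : Finset α → ℕ) (hM : IsMatroidRank rk) (hloopless : ∀ e : α, rk {e} = 1)
    (hrank : rk Finset.univ = r) (hr : 1 ≤ r)
    (rkP : Finset α → ℕ) (hP : IsPolymatroid rkP)
    (hfull : Module.finrank ℝ (affineSpan ℝ (basePolytope rkP)).direction =
      Fintype.card α - 1) :
    (Ideal.Quotient.mk (chowIdealQ rk)
        (∑ F : NonemptyFlat rk,
          ((rkP (Finset.univ \ F.1) : ℚ) - (rkP Finset.univ : ℚ)) •
            MvPolynomial.X F)) ^ (r - 1) ≠ 0 := by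
  subst hrank
  have : Nonempty α := not_isEmpty_iff.1 fun _ => by
    rw [univ_eq_empty, hM.1] at hr
    exact absurd hr (by norm_num)
  have hdivisor : Ideal.Quotient.mk (chowIdealQ rk) (∑ F : NonemptyFlat rk,
      ((rkP (univ \ F.1) : ℚ) - rkP univ) • MvPolynomial.X F) = ChowRing.divisor rk rkP := by
    rw [map_sum]
    rfl
  rw [hdivisor]
  exact ChowRing.divisor_pow_ne_zero hM (fun e => hloopless e ▸ one_pos) hP
    fun _ => rk_univ_lt_add_compl hfull
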